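/- arXiv:2508.09794 — 2 statements merged into one kernel-verified Lean document; each statement's English description precedes it below -/
import Mathlib

section
/- Let (R, ν) be a normalized BV₀ pair on (−1,1) of class BV₊ on I = (a₋, a₊), let a ∈ {a₋, a₊}, and let f ∈ D^I_{R,ν}. Then: (i) if lim_{t→a, t∈I} R(t) = 0, then lim_{t→a, t∈I} R(t)·f(t) = 0; and (ii) if lim_{t→a, t∈I} R(t) exists and is strictly positive, then lim_{t→a, t∈I} f(t) exists in ℝ. -/
open MeasureTheory Set Filter Function Topology

/-- A normalized BV₀ pair on `(-1,1)`: a signed Borel measure, represented by its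
mutually singular positive part `νp` and negative part `νm`, that is finite on compact
subsets of `(-1,1)`, gives no mass to `{0}` and lives on `(-1,1)`, together with a
function `R` satisfying the fundamental-theorem-of-calculus relations. -/
structure NormBV0 where
  R : ℝ → ℝ
  νp : Measure ℝ
  νm : Measure ℝ
  sing : νp.MutuallySingular νm
  supp_p : νp (Set.Ioo (-1 : ℝ) 1)ᶜ = 0
  supp_m : νm (Set.Ioo (-1 : ℝ) 1)ᶜ = 0
  locfin_p : ∀ K : Set ℝ, IsCompact K → K ⊆ Set.Ioo (-1 : ℝ) 1 → νp K ≠ ⊤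
  locfin_m : ∀ K : Set ℝ, IsCompact K → K ⊆ Set.Ioo (-1 : ℝ) 1 → νm K ≠ ⊤
  zero_p : νp {0} = 0
  zero_m : νm {0} = 0
  fund_pos : ∀ t ∈ Set.Ico (0 : ℝ) 1,
    R t = R 0 - ((∫ s in Set.Ioc (0 : ℝ) t, s ∂νp) - (∫ s in Set.Ioc (0 : ℝ) t, s ∂νm))
  fund_neg : ∀ t ∈ Set.Ioc (-1 : ℝ) 0,
    R t = R 0 + ((∫ s in Set.Ico t (0 : ℝ), s ∂νp) - (∫ s in Set.Ico t (0 : ℝ), s ∂νm))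

/-- The integral of `f` over `S` with respect to the signed measure `νp - νm`. -/
noncomputable def NormBV0.integ (P : NormBV0) (S : Set ℝ) (f : ℝ → ℝ) : ℝ :=
  (∫ s in S, f s ∂P.νp) - (∫ s in S, f s ∂P.νm)

/-- The transform `T_{R,ν} f`. -/
noncomputable def NormBV0.T (P : NormBV0) (f : ℝ → ℝ) (t : ℝ) : ℝ :=
  if 0 < t then P.R t * f t + t * P.integ (Set.Ioc 0 t) f
  else P.R t * f t - t * P.integ (Set.Ico t 0) f

/-- The pair `(R,ν)` is of class `BV₊` on the subinterval `I = (am, ap)`: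
`|ν|((-1,1)) < ∞`, `R > 0` on `I`, and `ν` or `-ν` is nonnegative. -/
def NormBV0.BVplusOn (P : NormBV0) (am ap : ℝ) : Prop :=
  P.νp (Set.Ioo (-1 : ℝ) 1) ≠ ⊤ ∧ P.νm (Set.Ioo (-1 : ℝ) 1) ≠ ⊤ ∧
  (∀ t ∈ Set.Ioo am ap, 0 < P.R t) ∧ (P.νm = 0 ∨ P.νp = 0)

/-- The class `D^I_{R,ν}` of continuous functions on `I = (am, ap)` whose four boundary
limits exist. -/
def NormBV0.memDI (P : NormBV0) (am ap : ℝ) (f : ℝ → ℝ) : Prop :=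
  ContinuousOn f (Set.Ioo am ap) ∧
  (∃ L : ℝ, Tendsto (fun t => P.R t * f t) (𝓝[<] ap) (𝓝 L)) ∧
  (∃ L : ℝ, Tendsto (fun t => P.R t * f t) (𝓝[>] am) (𝓝 L)) ∧
  (∃ L : ℝ, Tendsto (fun t => P.integ (Set.Ioc 0 t) f) (𝓝[<] ap) (𝓝 L)) ∧
  (∃ L : ℝ, Tendsto (fun t => P.integ (Set.Ico t 0) f) (𝓝[>] am) (𝓝 L))

/-- If `R` decreases to `0` at `a` with `dR = -s dμ` and `∫ f dμ` converges at `a`, then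
`R * f` cannot have a positive limit there: otherwise `f ≥ c / R` near `a`, and the integral
of `f` over `(u, a)` stays at least `c`. -/
theorem limit_mul_nonpos {μ : Measure ℝ} [IsFiniteMeasure μ] {R f : ℝ → ℝ} {a L J : ℝ}
    (ha0 : 0 < a) (ha1 : a ≤ 1)
    (hR : ∀ t ∈ Ico 0 a, R t = R 0 - ∫ s in Ioc 0 t, s ∂μ)
    (hpos : ∀ t ∈ Ico 0 a, 0 < R t) (hR0 : Tendsto R (𝓝[<] a) (𝓝 0))
    (hf : ContinuousOn f (Ico 0 a))
    (hL : Tendsto (fun t => R t * f t) (𝓝[<] a) (𝓝 L))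
    (hJ : Tendsto (fun t => ∫ s in Ioc 0 t, f s ∂μ) (𝓝[<] a) (𝓝 J)) : L ≤ 0 := by
  by_contra! hLpos
  have hint : ∀ {g : ℝ → ℝ}, ContinuousOn g (Ico 0 a) → ∀ u v : ℝ, 0 ≤ u → v < a →
      IntegrableOn g (Ioc u v) μ := fun {g} hg u v hu hv =>
    ((hg.mono fun x hx => ⟨hu.trans hx.1, hx.2.trans_lt hv⟩).integrableOn_compact
      isCompact_Icc).mono_set Ioc_subset_Icc_self
  have hsplit : ∀ {g : ℝ → ℝ}, ContinuousOn g (Ico 0 a) → ∀ u v : ℝ, 0 ≤ u → u ≤ v → v < a →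
      ∫ s in Ioc 0 v, g s ∂μ = (∫ s in Ioc 0 u, g s ∂μ) + ∫ s in Ioc u v, g s ∂μ := by
    intro g hg u v hu huv hv
    rw [← Ioc_union_Ioc_eq_Ioc hu huv]
    exact setIntegral_union (Ioc_disjoint_Ioc_of_le le_rfl) measurableSet_Ioc
      (hint hg 0 u le_rfl (huv.trans_lt hv)) (hint hg u v hu hv)
  have hdiff : ∀ u v : ℝ, 0 ≤ u → u ≤ v → v < a → R u - R v = ∫ s in Ioc u v, s ∂μ := by
    intro u v hu huv hv
    rw [hR u ⟨hu, huv.trans_lt hv⟩, hR v ⟨hu.trans huv, hv⟩,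
      hsplit (g := fun s => s) continuousOn_id u v hu huv hv]
    ring
  have hanti : ∀ u v : ℝ, 0 ≤ u → u ≤ v → v < a → R v ≤ R u := by
    intro u v hu huv hv
    have : 0 ≤ ∫ s in Ioc u v, s ∂μ :=
      setIntegral_nonneg measurableSet_Ioc fun s hs => hu.trans hs.1.le
    linarith [hdiff u v hu huv hv]
  obtain ⟨b, hba, hb⟩ : ∃ b < a, ∀ t ∈ Ioo b a, L / 2 < R t * f t :=
    (mem_nhdsLT_iff_exists_Ioo_subset' (sub_one_lt a)).1
      (hL.eventually_const_lt (half_lt_self hLpos))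
  have key : ∀ u : ℝ, 0 ≤ u → b < u → u < a → L / 2 ≤ J - ∫ s in Ioc 0 u, f s ∂μ := by
    intro u hu hbu hua
    have hRu : 0 < R u := hpos u ⟨hu, hua⟩
    have hle : ∀ᶠ v in 𝓝[<] a, L / 2 / R u * (R u - R v) ≤
        (∫ s in Ioc 0 v, f s ∂μ) - ∫ s in Ioc 0 u, f s ∂μ := by
      filter_upwards [Ioo_mem_nhdsLT hua] with v hv
      rw [hsplit hf u v hu hv.1.le hv.2, add_sub_cancel_left, hdiff u v hu hv.1.le hv.2,
        ← integral_const_mul]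
      refine setIntegral_mono_on ((hint (g := fun s => s) continuousOn_id u v hu hv.2).const_mul _)
        (hint hf u v hu hv.2) measurableSet_Ioc fun s hs => ?_
      have hsa : s < a := hs.2.trans_lt hv.2
      have hs0 : 0 ≤ s := hu.trans hs.1.le
      have hRs : 0 < R s := hpos s ⟨hs0, hsa⟩
      calc L / 2 / R u * s ≤ L / 2 / R u * 1 := by gcongr; linarith
        _ ≤ L / 2 / R s := by
          rw [mul_one]
          have := hanti u s hu hs.1.le hsa
          gcongr
        _ ≤ f s := by
          rw [div_le_iff₀ hRs, mul_comm]
          exact (hb s ⟨hbu.trans hs.1, hsa⟩).le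
    have hlim := le_of_tendsto_of_tendsto ((hR0.const_sub (R u)).const_mul (L / 2 / R u))
      (hJ.sub_const _) hle
    rwa [sub_zero, div_mul_cancel₀ _ hRu.ne'] at hlim
  have hev : ∀ᶠ u in 𝓝[<] a, L / 2 ≤ J - ∫ s in Ioc 0 u, f s ∂μ := by
    filter_upwards [Ioo_mem_nhdsLT (max_lt ha0 hba)] with u hu
    exact key u ((le_max_left _ _).trans hu.1.le) ((le_max_right _ _).trans_lt hu.1) hu.2
  have := ge_of_tendsto (hJ.const_sub J) hev
  linarith

/-- If `R → 0` at the right endpoint `a`, with `dR = -σ s dμ` for a sign `σ`, then any limit of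
`R * f` at `a` vanishes as soon as `∫ f dμ` converges. -/
theorem limit_mul_eq_zero_right {μ : Measure ℝ} [IsFiniteMeasure μ] {R f : ℝ → ℝ} {a L J σ : ℝ}
    (ha0 : 0 < a) (ha1 : a ≤ 1) (hσ : σ = 1 ∨ σ = -1)
    (hR : ∀ t ∈ Ico 0 a, R t = R 0 - σ * ∫ s in Ioc 0 t, s ∂μ)
    (hpos : ∀ t ∈ Ico 0 a, 0 < R t) (hR0 : Tendsto R (𝓝[<] a) (𝓝 0))
    (hf : ContinuousOn f (Ico 0 a))
    (hL : Tendsto (fun t => R t * f t) (𝓝[<] a) (𝓝 L))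
    (hJ : Tendsto (fun t => σ * ∫ s in Ioc 0 t, f s ∂μ) (𝓝[<] a) (𝓝 J)) : L = 0 := by
  rcases hσ with rfl | rfl
  · simp only [one_mul] at hR hJ
    refine le_antisymm (limit_mul_nonpos ha0 ha1 hR hpos hR0 hf hL hJ) ?_
    have := limit_mul_nonpos (f := fun t => -f t) (L := -L) (J := -J) ha0 ha1 hR hpos hR0 hf.neg
      (by simpa only [mul_neg] using hL.neg) (by simpa only [integral_neg] using hJ.neg)
    linarith
  · have hge : ∀ᶠ t in 𝓝[<] a, R 0 ≤ R t := by
      filter_upwards [Ioo_mem_nhdsLT ha0] with t ht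
      have : 0 ≤ ∫ s in Ioc 0 t, s ∂μ :=
        setIntegral_nonneg measurableSet_Ioc fun s hs => hs.1.le
      linarith [hR t ⟨ht.1.le, ht.2⟩]
    exact absurd (ge_of_tendsto hR0 hge) (hpos 0 ⟨le_rfl, ha0⟩).not_ge

theorem setIntegral_Ioc_map_neg (μ : Measure ℝ) (g : ℝ → ℝ) (t : ℝ) :
    ∫ s in Ioc 0 t, g s ∂(μ.map Neg.neg) = ∫ s in Ico (-t) 0, g (-s) ∂μ := by
  have hemb : MeasurableEmbedding (Neg.neg : ℝ → ℝ) := (MeasurableEquiv.neg ℝ).measurableEmbedding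
  rw [hemb.setIntegral_map]
  simp

/-- The counterpart of `limit_mul_eq_zero_right` at the left endpoint. -/
theorem limit_mul_eq_zero_left {μ : Measure ℝ} [IsFiniteMeasure μ] {R f : ℝ → ℝ} {a L J σ : ℝ}
    (ha0 : a < 0) (ha1 : -1 ≤ a) (hσ : σ = 1 ∨ σ = -1)
    (hR : ∀ t ∈ Ioc a 0, R t = R 0 + σ * ∫ s in Ico t 0, s ∂μ)
    (hpos : ∀ t ∈ Ioc a 0, 0 < R t) (hR0 : Tendsto R (𝓝[>] a) (𝓝 0))
    (hf : ContinuousOn f (Ioc a 0))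
    (hL : Tendsto (fun t => R t * f t) (𝓝[>] a) (𝓝 L))
    (hJ : Tendsto (fun t => σ * ∫ s in Ico t 0, f s ∂μ) (𝓝[>] a) (𝓝 J)) : L = 0 := by
  have hmem : ∀ t ∈ Ico 0 (-a), -t ∈ Ioc a 0 := fun t ht => ⟨by linarith [ht.2], by linarith [ht.1]⟩
  have hneg : Tendsto (fun t : ℝ => -t) (𝓝[<] (-a)) (𝓝[>] a) := by
    simpa using tendsto_neg_nhdsLT (a := -a)
  have : IsFiniteMeasure (μ.map Neg.neg) := Measure.isFiniteMeasure_map μ _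
  refine limit_mul_eq_zero_right (μ := μ.map Neg.neg) (R := fun t => R (-t))
    (f := fun t => f (-t)) (a := -a) (J := J) (by linarith) (by linarith) hσ (fun t ht => ?_)
    (fun t ht => hpos _ (hmem t ht)) (hR0.comp hneg) (hf.comp continuousOn_neg hmem)
    (hL.comp hneg) ?_
  · rw [setIntegral_Ioc_map_neg μ (fun s => s), integral_neg, neg_zero, hR _ (hmem t ht)]
    ring
  · simpa only [setIntegral_Ioc_map_neg, neg_neg, comp_def] using hJ.comp hneg

/-- If `R` has a nonzero limit and `R * f` converges, then `f` converges. -/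
theorem exists_tendsto_of_tendsto_mul {l : Filter ℝ} {R f : ℝ → ℝ} {L K : ℝ} (hL : L ≠ 0)
    (hR : Tendsto R l (𝓝 L)) (hRf : Tendsto (fun t => R t * f t) l (𝓝 K)) :
    ∃ M : ℝ, Tendsto f l (𝓝 M) := by
  refine ⟨K / L, (hRf.div hR hL).congr' ?_⟩
  filter_upwards [hR.eventually_ne hL] with t ht
  exact mul_div_cancel_left₀ _ ht

theorem isFiniteMeasure_of_compl_null {μ : Measure ℝ} {S : Set ℝ} (hS : μ S ≠ ⊤)
    (hSc : μ Sᶜ = 0) : IsFiniteMeasure μ := by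
  refine ⟨?_⟩
  rw [← union_compl_self S]
  exact measure_union_lt_top hS.lt_top (hSc ▸ ENNReal.zero_lt_top)

/-- For a `BV₊` pair, `ν = σ μ` with `σ` a sign and `μ` a finite positive measure. -/
theorem NormBV0.BVplusOn.exists_sign {P : NormBV0} {am ap : ℝ} (h : P.BVplusOn am ap) :
    ∃ (σ : ℝ) (μ : Measure ℝ), (σ = 1 ∨ σ = -1) ∧ IsFiniteMeasure μ ∧
      ∀ S g, P.integ S g = σ * ∫ s in S, g s ∂μ := by
  obtain ⟨hp, hm, -, h0 | h0⟩ := h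
  · exact ⟨1, P.νp, Or.inl rfl, isFiniteMeasure_of_compl_null hp P.supp_p,
      fun S g => by simp [NormBV0.integ, h0]⟩
  · exact ⟨-1, P.νm, Or.inr rfl, isFiniteMeasure_of_compl_null hm P.supp_m,
      fun S g => by simp [NormBV0.integ, h0]⟩

/-- Endpoint behavior of functions in `D^I_{R,ν}` for a `BV₊` pair on
`I = (a₋,a₊)`: (i) if `R → 0` at an endpoint then `R·f → 0` there; (ii) if `R` tends to a
strictly positive limit at an endpoint then `f` has a limit there. -/
theorem bv0_endpoint_limits (P : NormBV0) (am ap : ℝ)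
    (h1 : -1 ≤ am) (h2 : am < 0) (h3 : 0 < ap) (h4 : ap ≤ 1)
    (hBV : P.BVplusOn am ap) (f : ℝ → ℝ) (hf : P.memDI am ap f) :
    ((Tendsto P.R (𝓝[<] ap) (𝓝 0) →
        Tendsto (fun t => P.R t * f t) (𝓝[<] ap) (𝓝 0)) ∧
      (∀ L : ℝ, 0 < L → Tendsto P.R (𝓝[<] ap) (𝓝 L) →
        ∃ M : ℝ, Tendsto f (𝓝[<] ap) (𝓝 M))) ∧
    ((Tendsto P.R (𝓝[>] am) (𝓝 0) →
        Tendsto (fun t => P.R t * f t) (𝓝[>] am) (𝓝 0)) ∧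
      (∀ L : ℝ, 0 < L → Tendsto P.R (𝓝[>] am) (𝓝 L) →
        ∃ M : ℝ, Tendsto f (𝓝[>] am) (𝓝 M))) := by
  obtain ⟨σ, μ, hσ, hμ, hint⟩ := hBV.exists_sign
  have hpos := hBV.2.2.1
  obtain ⟨hcont, ⟨Lp, hLp⟩, ⟨Lm, hLm⟩, ⟨Jp, hJp⟩, ⟨Jm, hJm⟩⟩ := hf
  simp only [hint] at hJp hJm
  have hsubp : Ico 0 ap ⊆ Ioo am ap := fun t ht => ⟨h2.trans_le ht.1, ht.2⟩
  have hsubm : Ioc am 0 ⊆ Ioo am ap := fun t ht => ⟨ht.1, ht.2.trans_lt h3⟩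
  refine ⟨⟨fun h => ?_, fun L hL h => exists_tendsto_of_tendsto_mul hL.ne' h hLp⟩,
    fun h => ?_, fun L hL h => exists_tendsto_of_tendsto_mul hL.ne' h hLm⟩
  · have hzero : Lp = 0 := limit_mul_eq_zero_right h3 h4 hσ
      (fun t ht => by rw [← hint]; exact P.fund_pos t ⟨ht.1, ht.2.trans_le h4⟩)
      (fun t ht => hpos t (hsubp ht)) h (hcont.mono hsubp) hLp hJp
    rwa [hzero] at hLp
  · have hzero : Lm = 0 := limit_mul_eq_zero_left h2 h1 hσ
      (fun t ht => by rw [← hint]; exact P.fund_neg t ⟨h1.trans_lt ht.1, ht.2⟩)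
      (fun t ht => hpos t (hsubm ht)) h (hcont.mono hsubm) hLm hJm
    rwa [hzero] at hLm
end

section
/- Let C ⊆ ℝⁿ be a body of revolution that is not a vertical segment. Then the function R_C is monotonically nondecreasing on (−1,0], monotonically nonincreasing on [0,1), and there exists δ > 0 such that R_C(t) > 0 for all t ∈ (−δ,δ). -/
open Set Filter Topology Function
open scoped RealInnerProductSpace Pointwise

/-- Euclidean space `ℝ^(n+1)`. -/
abbrev Euc (n : ℕ) := EuclideanSpace ℝ (Fin (n + 1))

/-- The last standard basis vector `e_n`. -/
noncomputable def eAx (n : ℕ) : Euc n := EuclideanSpace.single (Fin.last n) (1 : ℝ)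

/-- Support function of a set `K`. -/
noncomputable def suppFn {n : ℕ} (K : Set (Euc n)) (u : Euc n) : ℝ :=
  sSup ((fun x => ⟪x, u⟫) '' K)

/-- The face of `K` in direction `u`. -/
def face {n : ℕ} (K : Set (Euc n)) (u : Euc n) : Set (Euc n) :=
  {x ∈ K | ⟪x, u⟫ = suppFn K u}

/-- `C` is a body of revolution with axis `e_n`: it is invariant under every linear
isometry fixing `e_n`. -/
def IsRevBody {n : ℕ} (C : Set (Euc n)) : Prop :=
  C.Nonempty ∧ IsCompact C ∧ Convex ℝ C ∧
    ∀ ρ : Euc n ≃ₗᵢ[ℝ] Euc n, ρ (eAx n) = eAx n → ρ '' C = C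

/-- The restricted support function `h̄_C(t) = h_C(t·e_n + √(1-t²)·ū)`. -/
noncomputable def hbar {n : ℕ} (C : Set (Euc n)) (ub : Euc n) (t : ℝ) : ℝ :=
  suppFn C (t • eAx n + Real.sqrt (1 - t ^ 2) • ub)

/-- The right derivative `∂₊h̄_C(t)` (as a limit along `𝓝[>] t`; it exists for bodies of
revolution). -/
noncomputable def rightDeriv (h : ℝ → ℝ) (t : ℝ) : ℝ :=
  limUnder (𝓝[>] t) fun s => (h s - h t) / (s - t)

/-- The profile function `R_C(t) = √(1-t²)·(h̄_C(t) - t·∂₊h̄_C(t))`. -/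
noncomputable def RC {n : ℕ} (C : Set (Euc n)) (ub : Euc n) (t : ℝ) : ℝ :=
  Real.sqrt (1 - t ^ 2) * (hbar C ub t - t * rightDeriv (hbar C ub) t)

/-! ### Convex functions on the line and the intercept of their right tangent -/

/-- The intercept at the origin of the right tangent line of `g` at `m`. -/
noncomputable def rightTangentIntercept (g : ℝ → ℝ) (m : ℝ) : ℝ :=
  g m - m * derivWithin g (Ioi m) m

/-- A convex function lies above each of its right tangent lines. -/
lemma ConvexOn.add_rightDeriv_mul_sub_le {g : ℝ → ℝ} (hg : ConvexOn ℝ univ g) (x y : ℝ) :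
    g x + derivWithin g (Ioi x) x * (y - x) ≤ g y := by
  have hx : x ∈ interior (univ : Set ℝ) := by simp
  rcases lt_trichotomy x y with hxy | rfl | hyx
  · have h := hg.rightDeriv_le_slope_of_mem_interior hx (mem_univ y) hxy
    rw [slope_def_field, le_div_iff₀ (sub_pos.2 hxy)] at h
    linarith
  · simp
  · have h := (hg.slope_le_leftDeriv_of_mem_interior (mem_univ y) hx hyx).trans
      (hg.leftDeriv_le_rightDeriv_of_mem_interior hx)
    rw [slope_def_field, div_le_iff₀ (sub_pos.2 hyx)] at h
    linarith

lemma ConvexOn.rightDeriv_mono {g : ℝ → ℝ} (hg : ConvexOn ℝ univ g) {x y : ℝ} (hxy : x ≤ y) :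
    derivWithin g (Ioi x) x ≤ derivWithin g (Ioi y) y :=
  hg.monotoneOn_rightDeriv (by simp) (by simp) hxy

lemma ConvexOn.monotoneOn_rightTangentIntercept {g : ℝ → ℝ} (hg : ConvexOn ℝ univ g) :
    MonotoneOn (rightTangentIntercept g) (Iic 0) := by
  intro x _ y hy hxy
  have h := hg.add_rightDeriv_mul_sub_le x y
  have h' := mul_le_mul_of_nonpos_left (hg.rightDeriv_mono hxy) hy
  simp only [rightTangentIntercept]
  linarith

lemma ConvexOn.antitoneOn_rightTangentIntercept {g : ℝ → ℝ} (hg : ConvexOn ℝ univ g) :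
    AntitoneOn (rightTangentIntercept g) (Ici 0) := by
  intro x hx y _ hxy
  have h := hg.add_rightDeriv_mul_sub_le y x
  have h' := mul_le_mul_of_nonneg_left (hg.rightDeriv_mono hxy) hx
  simp only [rightTangentIntercept]
  linarith

lemma ConvexOn.eventually_rightTangentIntercept_pos {g : ℝ → ℝ} (hg : ConvexOn ℝ univ g)
    (h0 : 0 < g 0) : ∀ᶠ m in 𝓝 0, 0 < rightTangentIntercept g m := by
  have hc : Continuous g := continuousOn_univ.1 (hg.continuousOn isOpen_univ)
  have hcont : Continuous fun m => 2 * g m - g (2 * m) := by fun_prop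
  filter_upwards [(hcont.tendsto 0).eventually_const_lt (u := 0) (by simp; linarith)]
    with m hm
  have h := hg.add_rightDeriv_mul_sub_le m (2 * m)
  simp only [rightTangentIntercept]
  linarith

/-! ### The slope `t / √(1 - t²)` -/

lemma sqrt_one_sub_sq_pos {t : ℝ} (ht : t ∈ Ioo (-1 : ℝ) 1) : 0 < √(1 - t ^ 2) :=
  Real.sqrt_pos.2 (by nlinarith [ht.1, ht.2])

lemma strictMonoOn_div_sqrt_one_sub_sq :
    StrictMonoOn (fun t : ℝ => t / √(1 - t ^ 2)) (Ioo (-1) 1) := by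
  intro a ha b hb hab
  simp only [← Real.tan_arcsin]
  exact Real.tan_lt_tan_of_lt_of_lt_pi_div_two (Real.neg_pi_div_two_lt_arcsin.2 ha.1)
    (Real.arcsin_lt_pi_div_two.2 hb.2)
    (Real.strictMonoOn_arcsin (Ioo_subset_Icc_self ha) (Ioo_subset_Icc_self hb) hab)

lemma hasDerivAt_sqrt_one_sub_sq {t : ℝ} (ht : t ∈ Ioo (-1 : ℝ) 1) :
    HasDerivAt (fun t : ℝ => √(1 - t ^ 2)) (-t / √(1 - t ^ 2)) t := by
  have h : HasDerivAt (fun t : ℝ => 1 - t ^ 2) (-(2 * t)) t := by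
    simpa using (hasDerivAt_pow 2 t).const_sub 1
  have hs := sqrt_one_sub_sq_pos ht
  convert h.sqrt (Real.sqrt_pos.1 hs).ne' using 1
  field_simp

lemma hasDerivAt_div_sqrt_one_sub_sq {t : ℝ} (ht : t ∈ Ioo (-1 : ℝ) 1) :
    HasDerivAt (fun t : ℝ => t / √(1 - t ^ 2)) (1 / √(1 - t ^ 2) ^ 3) t := by
  have hs := sqrt_one_sub_sq_pos ht
  have hsq : √(1 - t ^ 2) ^ 2 = 1 - t ^ 2 := Real.sq_sqrt (Real.sqrt_pos.1 hs).le
  refine ((hasDerivAt_id' t).fun_div (hasDerivAt_sqrt_one_sub_sq ht) hs.ne').congr_deriv ?_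
  field_simp
  linarith

/-- Right derivative of the homogenization `t ↦ √(1-t²) g(t / √(1-t²))` of a convex function. -/
lemma ConvexOn.hasDerivWithinAt_homogenization {g : ℝ → ℝ} (hg : ConvexOn ℝ univ g) {t : ℝ}
    (ht : t ∈ Ioo (-1 : ℝ) 1) :
    HasDerivWithinAt (fun t => √(1 - t ^ 2) * g (t / √(1 - t ^ 2)))
      (-t / √(1 - t ^ 2) * g (t / √(1 - t ^ 2)) + √(1 - t ^ 2) *
        (derivWithin g (Ioi (t / √(1 - t ^ 2))) (t / √(1 - t ^ 2)) * (1 / √(1 - t ^ 2) ^ 3)))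
      (Ioo t 1) t :=
  (hasDerivAt_sqrt_one_sub_sq ht).hasDerivWithinAt.mul <|
    (hg.hasDerivWithinAt_rightDeriv_of_mem_interior (by simp)).comp t
      (hasDerivAt_div_sqrt_one_sub_sq ht).hasDerivWithinAt
      fun _ hs => strictMonoOn_div_sqrt_one_sub_sq ht ⟨ht.1.trans hs.1, hs.2⟩ hs.1

lemma HasDerivWithinAt.rightDeriv_eq {h : ℝ → ℝ} {h' t : ℝ}
    (hh : HasDerivWithinAt h h' (Ioi t) t) : rightDeriv h t = h' := by
  rw [hasDerivWithinAt_iff_tendsto_slope' (by simp)] at hh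
  refine Tendsto.limUnder_eq (hh.congr fun s => ?_)
  rw [slope_def_field]

/-! ### Support functions -/

section Support

variable {n : ℕ} {K : Set (Euc n)}

lemma IsCompact.bddAbove_inner (hK : IsCompact K) (u : Euc n) :
    BddAbove ((fun x => ⟪x, u⟫) '' K) :=
  (hK.image (by fun_prop)).bddAbove

lemma IsCompact.inner_le_suppFn (hK : IsCompact K) {x : Euc n} (hx : x ∈ K) (u : Euc n) :
    ⟪x, u⟫ ≤ suppFn K u :=
  le_csSup (hK.bddAbove_inner u) (mem_image_of_mem _ hx)

lemma suppFn_le (hne : K.Nonempty) {u : Euc n} {c : ℝ} (h : ∀ x ∈ K, ⟪x, u⟫ ≤ c) :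
    suppFn K u ≤ c :=
  csSup_le (hne.image _) (forall_mem_image.2 h)

lemma suppFn_smul (K : Set (Euc n)) {c : ℝ} (hc : 0 ≤ c) (u : Euc n) :
    suppFn K (c • u) = c * suppFn K u := by
  have h : (fun x => ⟪x, c • u⟫) '' K = c • ((fun x => ⟪x, u⟫) '' K) := by
    rw [← image_smul, image_image]
    simp [real_inner_smul_right]
  rw [suppFn, h, Real.sSup_smul_of_nonneg hc, smul_eq_mul, suppFn]

lemma IsCompact.convexOn_suppFn (hK : IsCompact K) (hne : K.Nonempty) :
    ConvexOn ℝ univ (suppFn K) := by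
  refine ⟨convex_univ, fun u _ v _ a b ha hb _ => suppFn_le hne fun x hx => ?_⟩
  rw [inner_add_right, real_inner_smul_right, real_inner_smul_right, smul_eq_mul, smul_eq_mul]
  gcongr <;> exact hK.inner_le_suppFn hx _

lemma IsCompact.convexOn_suppFn_line (hK : IsCompact K) (hne : K.Nonempty) (e u : Euc n) :
    ConvexOn ℝ univ fun m : ℝ => suppFn K (m • e + u) := by
  refine ⟨convex_univ, fun x _ y _ a b ha hb hab => ?_⟩
  have h := (hK.convexOn_suppFn hne).2 (mem_univ (x • e + u)) (mem_univ (y • e + u)) ha hb hab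
  convert h using 2
  obtain rfl : b = 1 - a := by linarith
  simp only [smul_eq_mul]
  module

lemma hbar_eq (C : Set (Euc n)) (ub : Euc n) {t : ℝ} (ht : t ∈ Ioo (-1 : ℝ) 1) :
    hbar C ub t = √(1 - t ^ 2) * suppFn C ((t / √(1 - t ^ 2)) • eAx n + ub) := by
  have hs := sqrt_one_sub_sq_pos ht
  rw [← suppFn_smul C hs.le, smul_add, smul_smul, mul_div_cancel₀ _ hs.ne', hbar]

/-- In terms of the slope `m = t / √(1-t²)`, the profile function is the intercept of the right
tangent of the convex function `m ↦ h_C(m e_n + ū)`. -/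
lemma RC_eq_rightTangentIntercept {C : Set (Euc n)} (hC : IsCompact C) (hne : C.Nonempty)
    (ub : Euc n) {t : ℝ} (ht : t ∈ Ioo (-1 : ℝ) 1) :
    RC C ub t =
      rightTangentIntercept (fun m => suppFn C (m • eAx n + ub)) (t / √(1 - t ^ 2)) := by
  have hs := sqrt_one_sub_sq_pos ht
  have hsq : √(1 - t ^ 2) ^ 2 = 1 - t ^ 2 := Real.sq_sqrt (Real.sqrt_pos.1 hs).le
  have hd := (hC.convexOn_suppFn_line hne (eAx n) ub).hasDerivWithinAt_homogenization ht
  have hd' := (hd.congr (fun s hs => hbar_eq C ub ⟨ht.1.trans hs.1, hs.2⟩)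
    (hbar_eq C ub ht)).mono_of_mem_nhdsWithin (t := Ioo t 1) (Ioo_mem_nhdsGT ht.2)
  rw [RC, hd'.rightDeriv_eq, hbar_eq C ub ht, rightTangentIntercept]
  field_simp
  rw [pow_succ, hsq]
  ring

end Support

/-! ### Bodies of revolution -/

lemma norm_eAx (n : ℕ) : ‖eAx n‖ = 1 := by simp [eAx]

/-- The support function of a body of revolution at a horizontal vector bounds the inner products
with every horizontal vector of the same norm. -/
lemma IsRevBody.inner_le_suppFn_of_horizontal {n : ℕ} {C : Set (Euc n)} (hC : IsRevBody C)
    {u v x : Euc n} (hu : ⟪eAx n, u⟫ = 0) (hv : ⟪eAx n, v⟫ = 0) (huv : ‖u‖ = ‖v‖) (hx : x ∈ C) :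
    ⟪x, v⟫ ≤ suppFn C u := by
  let ρ : Euc n ≃ₗᵢ[ℝ] Euc n := (ℝ ∙ (v - u))ᗮ.reflection
  have hρ : ρ (eAx n) = eAx n := by
    refine Submodule.reflection_mem_subspace_eq_self
      (Submodule.mem_orthogonal_singleton_iff_inner_left.2 ?_)
    rw [inner_sub_right, hu, hv, sub_zero]
  have hρx : ρ x ∈ C := by
    rw [← hC.2.2.2 ρ hρ]
    exact mem_image_of_mem _ hx
  have h := hC.2.1.inner_le_suppFn hρx u
  have hρv : ρ v = u := Submodule.reflection_sub huv.symm
  rwa [← ρ.inner_map_map, hρv]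

/-- A nonempty compact convex subset of the axis is a vertical segment. -/
lemma exists_eq_vertical_segment {n : ℕ} {C : Set (Euc n)} (hne : C.Nonempty)
    (hC : IsCompact C) (hconv : Convex ℝ C) (haxis : ∀ x ∈ C, x = ⟪eAx n, x⟫ • eAx n) :
    ∃ (x : Euc n) (l : ℝ), 0 ≤ l ∧ C = (fun s => x + s • eAx n) '' Icc 0 l := by
  set I : Set ℝ := (fun x => ⟪eAx n, x⟫) '' C with hI
  have hcont : Continuous fun x : Euc n => ⟪eAx n, x⟫ := by fun_prop
  have hIcc : I = Icc (sInf I) (sSup I) := eq_Icc_of_connected_compact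
    ((hconv.isConnected hne).image _ hcont.continuousOn) (hC.image hcont)
  have hle : sInf I ≤ sSup I := nonempty_Icc.1 (hIcc ▸ hne.image _)
  refine ⟨sInf I • eAx n, sSup I - sInf I, sub_nonneg.2 hle, ?_⟩
  have hCI : C = (fun s : ℝ => s • eAx n) '' I := by
    rw [hI, image_image]
    exact (image_id C).symm.trans (image_congr haxis)
  have hshift : I = (fun s => sInf I + s) '' Icc 0 (sSup I - sInf I) := by
    rw [image_const_add_Icc, add_zero, add_sub_cancel]
    exact hIcc
  calc C = (fun s : ℝ => s • eAx n) '' ((fun s => sInf I + s) '' Icc 0 (sSup I - sInf I)) := by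
        rw [← hshift]
        exact hCI
    _ = _ := by
        rw [image_image]
        simp only [add_smul]

/-- A body of revolution that is not a vertical segment has positive width around its axis. -/
lemma IsRevBody.suppFn_pos {n : ℕ} {C : Set (Euc n)} (hC : IsRevBody C)
    (hseg : ¬ ∃ (x : Euc n) (l : ℝ), 0 ≤ l ∧ C = (fun s => x + s • eAx n) '' Icc 0 l)
    {ub : Euc n} (hub : ‖ub‖ = 1) (horth : ⟪eAx n, ub⟫ = 0) : 0 < suppFn C ub := by
  by_contra! hneg
  refine hseg (exists_eq_vertical_segment hC.1 hC.2.1 hC.2.2.1 fun x hx => ?_)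
  by_contra hne
  set w : Euc n := x - ⟪eAx n, x⟫ • eAx n with hw
  have hw0 : w ≠ 0 := sub_ne_zero.2 hne
  have hwpos : 0 < ‖w‖ := norm_pos_iff.2 hw0
  have hwe : ⟪eAx n, w⟫ = 0 := by
    rw [hw, inner_sub_right, real_inner_smul_right, real_inner_self_eq_norm_sq, norm_eAx]
    ring
  have hxw : ⟪x, w⟫ = ‖w‖ ^ 2 := by
    have hx' : x = w + ⟪eAx n, x⟫ • eAx n := by rw [hw, sub_add_cancel]
    rw [hx', inner_add_left, real_inner_smul_left, hwe, real_inner_self_eq_norm_sq]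
    ring
  have h := hC.inner_le_suppFn_of_horizontal (v := ‖w‖⁻¹ • w) horth
    (by rw [real_inner_smul_right, hwe, mul_zero])
    (by rw [hub, norm_smul, norm_inv, norm_norm, inv_mul_cancel₀ hwpos.ne']) hx
  rw [real_inner_smul_right, hxw] at h
  have : 0 < ‖w‖⁻¹ * ‖w‖ ^ 2 := by positivity
  linarith

/-- For a body of revolution `C` that is not a vertical segment, `R_C`
is nondecreasing on `(-1,0]`, nonincreasing on `[0,1)`, and strictly positive on a
neighborhood `(-δ,δ)` of `0`. -/
theorem revBody_profile_monotone {n : ℕ} (hn : 1 ≤ n) (C : Set (Euc n)) (hC : IsRevBody C)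
    (hseg : ¬ ∃ (x : Euc n) (l : ℝ), 0 ≤ l ∧ C = (fun s => x + s • eAx n) '' Set.Icc 0 l)
    (ub : Euc n) (hub : ‖ub‖ = 1) (horth : ⟪eAx n, ub⟫ = 0) :
    MonotoneOn (RC C ub) (Set.Ioc (-1 : ℝ) 0) ∧
    AntitoneOn (RC C ub) (Set.Ico (0 : ℝ) 1) ∧
    ∃ δ > (0 : ℝ), ∀ t ∈ Set.Ioo (-δ) δ, 0 < RC C ub t := by
  have hg := hC.2.1.convexOn_suppFn_line hC.1 (eAx n) ub
  have hR : ∀ t ∈ Ioo (-1 : ℝ) 1, RC C ub t = _ := fun t ht =>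
    RC_eq_rightTangentIntercept hC.2.1 hC.1 ub ht
  have hm := strictMonoOn_div_sqrt_one_sub_sq.monotoneOn
  refine ⟨fun a ha b hb hab => ?_, fun a ha b hb hab => ?_, ?_⟩
  · have ha' : a ∈ Ioo (-1 : ℝ) 1 := ⟨ha.1, ha.2.trans_lt one_pos⟩
    have hb' : b ∈ Ioo (-1 : ℝ) 1 := ⟨hb.1, hb.2.trans_lt one_pos⟩
    rw [hR a ha', hR b hb']
    exact hg.monotoneOn_rightTangentIntercept
      (div_nonpos_of_nonpos_of_nonneg ha.2 (Real.sqrt_nonneg _))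
      (div_nonpos_of_nonpos_of_nonneg hb.2 (Real.sqrt_nonneg _)) (hm ha' hb' hab)
  · have ha' : a ∈ Ioo (-1 : ℝ) 1 := ⟨neg_one_lt_zero.trans_le ha.1, ha.2⟩
    have hb' : b ∈ Ioo (-1 : ℝ) 1 := ⟨neg_one_lt_zero.trans_le hb.1, hb.2⟩
    rw [hR a ha', hR b hb']
    exact hg.antitoneOn_rightTangentIntercept (div_nonneg ha.1 (Real.sqrt_nonneg _))
      (div_nonneg hb.1 (Real.sqrt_nonneg _)) (hm ha' hb' hab)
  · have hpos := hg.eventually_rightTangentIntercept_pos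
      (by simpa using hC.suppFn_pos hseg hub horth)
    have hzero : Tendsto (fun t : ℝ => t / √(1 - t ^ 2)) (𝓝 0) (𝓝 0) := by
      simpa [ContinuousAt] using
        (hasDerivAt_div_sqrt_one_sub_sq (t := 0) (by norm_num)).continuousAt
    have hRpos : ∀ᶠ t in 𝓝 (0 : ℝ), 0 < RC C ub t := by
      filter_upwards [hzero.eventually hpos,
        Ioo_mem_nhds (neg_one_lt_zero (R := ℝ)) one_pos] with t ht ht'
      rwa [hR t ht']
    obtain ⟨δ, hδ, hball⟩ := Metric.eventually_nhds_iff.1 hRpos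
    exact ⟨δ, hδ, fun t ht => hball (by simpa [Real.dist_eq, abs_lt] using ht)⟩
end
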